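/- Let S be a CFCST system over Σ. For every x ∈ Σ, the converse rule (C1^x) is eliminable in G3Km(S) + {(Pr_⟨x⟩) : x ∈ Σ} − {(p^x_s) : x → s ∈ S}: every labelled sequent derivable in the calculus whose rules are (id), (∨r), (∧r), ([x]), (⟨x⟩), the propagation rules (Pr_⟨x⟩) (x ∈ Σ) and the converse rules (C1^x) (x ∈ Σ) is derivable in this calculus without any use of the rules (C1^x). -/

import Mathlib

/-!
Labelled sequent calculi for context-free grammar logics with converse.
-/

namespace GrammarLogic

/-- Modal formulae in negation normal form over the alphabet `α`:
literals `p`, `p̄`, and the connectives `∨`, `∧`, `⟨x⟩`, `[x]` (`x ∈ α`). -/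
inductive Fml (α : Type) : Type
  | pos : ℕ → Fml α
  | neg : ℕ → Fml α
  | or  : Fml α → Fml α → Fml α
  | and : Fml α → Fml α → Fml α
  | dia : α → Fml α → Fml α
  | box : α → Fml α → Fml α

/-- Multisets of relational atoms `R_x w u` (labels are natural numbers). -/
abbrev RAtms (α : Type) : Type := Multiset (α × ℕ × ℕ)

/-- Multisets of labelled formulae `w : φ`. -/
abbrev LFmls (α : Type) : Type := Multiset (ℕ × Fml α)

/-- The converse `s̄` of a string: reverse and apply the converse characterwise. -/
def strConv {α : Type} (bar : α → α) (s : List α) : List α := s.reverse.map bar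

/-- A context-free converse-closed string rewriting (CFCST) system over `α`
with converse operation `bar`: a finite set of production rules closed under
converses. -/
structure CFCST (α : Type) (bar : α → α) : Type where
  rules : Set (α × List α)
  finite : rules.Finite
  closed : ∀ x s, (x, s) ∈ rules ↔ (bar x, strConv bar s) ∈ rules

/-- One-step rewriting: replace an occurrence of the head of a production rule
by its body. -/
def OneStep {α : Type} (P : Set (α × List α)) (s t : List α) : Prop :=
  ∃ u v x r, (x, r) ∈ P ∧ s = u ++ x :: v ∧ t = u ++ r ++ v

/-- `Lang P x s` iff `x →*_S s`, i.e. `s ∈ L_S(x)`. -/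
def Lang {α : Type} (P : Set (α × List α)) (x : α) (s : List α) : Prop :=
  Relation.ReflTransGen (OneStep P) [x] s

/-- Edges of the propagation graph determined by the relational atoms `R`:
each `R_x w u` in `R` gives an edge `(w,u)` labelled `x` and an edge `(u,w)`
labelled `x̄`. -/
def Edge {α : Type} (bar : α → α) (R : RAtms α) (w u : ℕ) (c : α) : Prop :=
  (c, w, u) ∈ R ∨ (bar c, u, w) ∈ R

/-- `PPath bar R w u s`: there is a (possibly empty) propagation path from `w`
to `u` in the propagation graph determined by `R` whose string is `s`. -/
inductive PPath {α : Type} (bar : α → α) (R : RAtms α) : ℕ → ℕ → List α → Prop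
  | nil (w : ℕ) : PPath bar R w w []
  | cons {w u v : ℕ} {c : α} {s : List α} :
      Edge bar R w u c → PPath bar R u v s → PPath bar R w v (c :: s)

/-- Side condition of the propagation rule `(Pr_⟨x⟩)`: there is a propagation
path from `w` to `u` whose string belongs to `L_S(x)`. -/
def PropCond {α : Type} (bar : α → α) (P : Set (α × List α)) (R : RAtms α)
    (x : α) (w u : ℕ) : Prop :=
  ∃ s, PPath bar R w u s ∧ Lang P x s

/-- The label `v` occurs in the labelled sequent `R ⊢ Γ`. -/
def occursIn {α : Type} (v : ℕ) (R : RAtms α) (Γ : LFmls α) : Prop :=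
  (∃ x w u, (x, w, u) ∈ R ∧ (v = w ∨ v = u)) ∨ ∃ φ, (v, φ) ∈ Γ

/-- `ChainR s w u C`: the multiset `C` is a chain of relational atoms `R_s w u`
(for `s = ε` it is empty and `u = w`). -/
inductive ChainR {α : Type} : List α → ℕ → ℕ → RAtms α → Prop
  | nil (w : ℕ) : ChainR [] w w 0
  | cons {y : α} {s : List α} {w v u : ℕ} {C : RAtms α} :
      ChainR s v u C → ChainR (y :: s) w u ((y, w, v) ::ₘ C)

/-- Gated labelled sequent calculi for grammar logics.  The rules `(id)`, `(∨r)`,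
`(∧r)` and `([x])` are always present; the rules `(⟨x⟩)`, the propagation rules
`(Pr_⟨x⟩)`, the structural rules `(p^x_s)` (for `x → s ∈ P`) and the converse
rules `(C1^x)` are present exactly when the respective gates `gDia`, `gPr`,
`gProd`, `gCnv` hold.  In particular, `Der bar P True False True True` is the
labelled calculus `G3Km(S)` and `Der bar P False True False False` is the
refined labelled calculus `Km(S)L`. -/
inductive Der {α : Type} (bar : α → α) (P : Set (α × List α))
    (gDia gPr gProd gCnv : Prop) : RAtms α → LFmls α → Prop
  | id (R : RAtms α) (Γ : LFmls α) (w p : ℕ) :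
      Der bar P gDia gPr gProd gCnv R ((w, Fml.pos p) ::ₘ (w, Fml.neg p) ::ₘ Γ)
  | orr {R : RAtms α} {Γ : LFmls α} {w : ℕ} {φ ψ : Fml α} :
      Der bar P gDia gPr gProd gCnv R ((w, φ) ::ₘ (w, ψ) ::ₘ Γ) →
      Der bar P gDia gPr gProd gCnv R ((w, Fml.or φ ψ) ::ₘ Γ)
  | andr {R : RAtms α} {Γ : LFmls α} {w : ℕ} {φ ψ : Fml α} :
      Der bar P gDia gPr gProd gCnv R ((w, φ) ::ₘ Γ) →
      Der bar P gDia gPr gProd gCnv R ((w, ψ) ::ₘ Γ) →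
      Der bar P gDia gPr gProd gCnv R ((w, Fml.and φ ψ) ::ₘ Γ)
  | boxr {R : RAtms α} {Γ : LFmls α} {w u : ℕ} {x : α} {φ : Fml α} :
      ¬ occursIn u R ((w, Fml.box x φ) ::ₘ Γ) →
      Der bar P gDia gPr gProd gCnv ((x, w, u) ::ₘ R) ((u, φ) ::ₘ Γ) →
      Der bar P gDia gPr gProd gCnv R ((w, Fml.box x φ) ::ₘ Γ)
  | diar {R : RAtms α} {Γ : LFmls α} {w u : ℕ} {x : α} {φ : Fml α} :
      gDia →
      Der bar P gDia gPr gProd gCnv ((x, w, u) ::ₘ R)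
        ((w, Fml.dia x φ) ::ₘ (u, φ) ::ₘ Γ) →
      Der bar P gDia gPr gProd gCnv ((x, w, u) ::ₘ R) ((w, Fml.dia x φ) ::ₘ Γ)
  | pr {R : RAtms α} {Γ : LFmls α} {w u : ℕ} {x : α} {φ : Fml α} :
      gPr → PropCond bar P R x w u →
      Der bar P gDia gPr gProd gCnv R ((w, Fml.dia x φ) ::ₘ (u, φ) ::ₘ Γ) →
      Der bar P gDia gPr gProd gCnv R ((w, Fml.dia x φ) ::ₘ Γ)
  | prodr {R C : RAtms α} {Γ : LFmls α} {x : α} {s : List α} {w u : ℕ} :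
      gProd → (x, s) ∈ P → ChainR s w u C →
      Der bar P gDia gPr gProd gCnv (C + ((x, w, u) ::ₘ R)) Γ →
      Der bar P gDia gPr gProd gCnv (C + R) Γ
  | cnvr {R : RAtms α} {Γ : LFmls α} {x : α} {w u : ℕ} :
      gCnv →
      Der bar P gDia gPr gProd gCnv ((x, w, u) ::ₘ (bar x, u, w) ::ₘ R) Γ →
      Der bar P gDia gPr gProd gCnv ((x, w, u) ::ₘ R) Γ

/-- The labelled calculus `G3Km(S)`. -/
abbrev G3Km {α : Type} (bar : α → α) (S : CFCST α bar) : RAtms α → LFmls α → Prop :=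
  Der bar S.rules True False True True

/-- The refined labelled calculus `Km(S)L`. -/
abbrev KmL {α : Type} (bar : α → α) (S : CFCST α bar) : RAtms α → LFmls α → Prop :=
  Der bar S.rules False True False False

/-! A single atom `R_x wu` already contributes both the edge `(w,u)` labelled `x` and the edge
`(u,w)` labelled `x̄`, so the atom `R_x̄ uw` supplied by `(C1^x)` leaves the propagation graph
unchanged. Since `(Pr_⟨x⟩)` sees the relational atoms only through that graph, and `(⟨x⟩)` is its
instance for paths with a single edge, a derivation survives the deletion of all atoms that
converse rules have introduced. -/

section ConverseElimination

variable {α : Type} {bar : α → α} {P : Set (α × List α)} {R R' : RAtms α} {Γ : LFmls α}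
  {a : α × ℕ × ℕ} {x : α} {v w u : ℕ} {s : List α}

theorem occursIn.mono (hR : R ⊆ R') (h : occursIn v R Γ) : occursIn v R' Γ :=
  h.imp_left fun ⟨x, w, u, hmem, hv⟩ => ⟨x, w, u, hR hmem, hv⟩

theorem Edge.mono (hR : R ⊆ R') (h : Edge bar R w u x) : Edge bar R' w u x :=
  h.imp (hR ·) (hR ·)

theorem edge_converse_iff (hbar : Function.Involutive bar) :
    Edge bar R u w (bar x) ↔ Edge bar R w u x := by
  simp only [Edge, hbar x, or_comm]

theorem PPath.mono (hE : ∀ ⦃x w u⦄, Edge bar R w u x → Edge bar R' w u x)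
    (h : PPath bar R w u s) : PPath bar R' w u s := by
  induction h with
  | nil w => exact .nil w
  | cons hedge _ ih => exact .cons (hE hedge) ih

theorem PropCond.mono (hE : ∀ ⦃x w u⦄, Edge bar R w u x → Edge bar R' w u x)
    (h : PropCond bar P R x w u) : PropCond bar P R' x w u :=
  h.imp fun _ ⟨hpath, hlang⟩ => ⟨hpath.mono hE, hlang⟩

theorem Edge.propCond (h : Edge bar R w u x) : PropCond bar P R x w u :=
  ⟨[x], .cons h (.nil u), .refl⟩

/-- `IsConverseReduct bar R' R`: the relational atoms `R'` arise from `R` by deleting atoms that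
remain edges of the propagation graph of `R'`. This is the relation between the sequents of a
derivation with its converse atoms removed and those of the original derivation. Inclusion is that
of the underlying sets, so multiplicities are ignored. -/
structure IsConverseReduct (bar : α → α) (R' R : RAtms α) : Prop where
  subset : R' ⊆ R
  edge_of_mem : ∀ ⦃x w u⦄, (x, w, u) ∈ R → Edge bar R' w u x

namespace IsConverseReduct

theorem refl (bar : α → α) (R : RAtms α) : IsConverseReduct bar R R where
  subset := Multiset.Subset.refl R
  edge_of_mem _ _ _ hmem := .inl hmem

theorem edge (hbar : Function.Involutive bar) (h : IsConverseReduct bar R' R)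
    (hedge : Edge bar R w u x) : Edge bar R' w u x :=
  hedge.elim (h.edge_of_mem ·) fun hmem => (edge_converse_iff hbar).1 (h.edge_of_mem hmem)

theorem cons (h : IsConverseReduct bar R' R) : IsConverseReduct bar (a ::ₘ R') (a ::ₘ R) where
  subset := Multiset.cons_subset_cons h.subset
  edge_of_mem _ _ _ hmem := by
    rcases Multiset.mem_cons.1 hmem with rfl | hmem
    · exact .inl (Multiset.mem_cons_self _ _)
    · exact (h.edge_of_mem hmem).mono (Multiset.subset_cons _ _)

theorem cons_right (h : IsConverseReduct bar R' R) (hedge : Edge bar R' w u x) :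
    IsConverseReduct bar R' ((x, w, u) ::ₘ R) where
  subset := Multiset.Subset.trans h.subset (Multiset.subset_cons _ _)
  edge_of_mem _ _ _ hmem := by
    rcases Multiset.mem_cons.1 hmem with heq | hmem
    · cases heq
      exact hedge
    · exact h.edge_of_mem hmem

theorem insert_converse (hbar : Function.Involutive bar)
    (h : IsConverseReduct bar R' ((x, w, u) ::ₘ R)) :
    IsConverseReduct bar R' ((x, w, u) ::ₘ (bar x, u, w) ::ₘ R) := by
  have hedge : Edge bar R' w u x := h.edge_of_mem (Multiset.mem_cons_self _ _)
  rw [Multiset.cons_swap]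
  exact h.cons_right ((edge_converse_iff hbar).2 hedge)

end IsConverseReduct

theorem Der.of_isConverseReduct (hbar : Function.Involutive bar) {gDia gDia' gPr gCnv : Prop}
    (h : Der bar P gDia gPr False gCnv R Γ) (hR : IsConverseReduct bar R' R) :
    Der bar P gDia' True False False R' Γ := by
  induction h generalizing R' with
  | id R Γ w p => exact .id R' Γ w p
  | orr _ ih => exact .orr (ih hR)
  | andr _ _ ihφ ihψ => exact .andr (ihφ hR) (ihψ hR)
  | boxr hfresh _ ih => exact .boxr (fun hocc => hfresh (hocc.mono hR.subset)) (ih hR.cons)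
  | diar _ _ ih =>
    have hedge := hR.edge_of_mem (Multiset.mem_cons_self _ _)
    exact .pr trivial hedge.propCond (ih hR)
  | pr _ hprop _ ih => exact .pr trivial (hprop.mono fun _ _ _ => hR.edge hbar) (ih hR)
  | prodr hProd => exact hProd.elim
  | cnvr _ _ ih => exact ih (hR.insert_converse hbar)

-- `gDia'` is arbitrary because each use of `(⟨x⟩)` becomes one of `(Pr_⟨x⟩)`.
theorem cnv_eliminable_general (hbar : Function.Involutive bar) {gDia gDia' gPr gCnv : Prop}
    (h : Der bar P gDia gPr False gCnv R Γ) : Der bar P gDia' True False False R Γ :=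
  h.of_isConverseReduct hbar (.refl bar R)

end ConverseElimination

/-- Let `S` be a CFCST system over `Σ`.  For every `x ∈ Σ` the
converse rule `(C1^x)` is eliminable in
`G3Km(S) + {(Pr_⟨x⟩) : x ∈ Σ} − {(p^x_s) : x → s ∈ S}`: every labelled sequent
derivable in the calculus with rules `(id)`, `(∨r)`, `(∧r)`, `([x])`, `(⟨x⟩)`,
the propagation rules `(Pr_⟨x⟩)` and the converse rules `(C1^x)` is derivable in
this calculus without any use of the rules `(C1^x)`. -/
theorem cnv_eliminable {α : Type} (bar : α → α) (hbar : Function.Involutive bar)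
    (S : CFCST α bar) (R : RAtms α) (Γ : LFmls α)
    (h : Der bar S.rules True True False True R Γ) :
    Der bar S.rules True True False False R Γ := by
  exact cnv_eliminable_general hbar h

end GrammarLogic
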